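/- arXiv:2209.00051 — 5 statements merged into one kernel-verified Lean document; each statement's English description precedes it below -/
import Mathlib

section
/- Let n ≥ 1. For every function f : [n] → ℙ′ there is exactly one permutation w ∈ S_n such that f is an enriched w-partition. -/
/-- The Stembridge total order `⪯` on the nonzero integers `ℙ′`:
`a ⪯ b` iff `a = b`, or `|a| < |b|`, or `|a| = |b|` with `a < 0 < b`. -/
def ple (a b : ℤ) : Prop :=
  a = b ∨ |a| < |b| ∨ (|a| = |b| ∧ a < 0 ∧ 0 < b)

/-- `f : [n] → ℙ′` is an enriched `v`-partition, where the word of `v` is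
`v 0, v 1, …, v (n-1)` (0-indexed positions): `f` never vanishes,
`f (v j) ⪯ f (v (j+1))` for consecutive positions, equal positive values force an
ascent of the word and equal negative values force a descent. -/
def IsEnrichedLin (n : ℕ) (v : Fin n → Fin n) (f : Fin n → ℤ) : Prop :=
  (∀ i, f i ≠ 0) ∧
  ∀ j k : Fin n, (j : ℕ) + 1 = (k : ℕ) →
    ple (f (v j)) (f (v k)) ∧
      (f (v j) = f (v k) → (0 < f (v j) → v j < v k) ∧ (f (v j) < 0 → v k < v j))

/-!
Sort `Fin n` by the key `((|f i|, f i), f i * i)`, ordered lexicographically. The pair `(|a|, a)`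
realises the order `⪯`, and where `f` is constant the last entry increases or decreases with `i`
according to the sign of `f`. So the key is injective, the enriched partition conditions on the
word of `w` say that the key increases strictly along it, and exactly one permutation sorts `n`
distinct keys.
-/

section StrictMono

variable {n : ℕ} {α : Type*}

theorem strictMono_iff_lt_of_val_add_one_eq [Preorder α] {g : Fin n → α} :
    StrictMono g ↔ ∀ j k : Fin n, (j : ℕ) + 1 = k → g j < g k := by
  simp only [strictMono_iff_forall_covBy, Fin.covBy_iff, Nat.covBy_iff_add_one_eq]

theorem existsUnique_perm_strictMono_comp [LinearOrder α] {g : Fin n → α}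
    (hg : Function.Injective g) : ∃! w : Equiv.Perm (Fin n), StrictMono (g ∘ w) := by
  refine ⟨Tuple.sort g, ?_, fun w hw => ?_⟩
  · exact (Tuple.monotone_sort g).strictMono_of_injective (hg.comp (Tuple.sort g).injective)
  · have hcomp : g ∘ w = g ∘ Tuple.sort g :=
      Tuple.unique_monotone hw.monotone (Tuple.monotone_sort g)
    exact DFunLike.coe_injective (hg.comp_left hcomp)

end StrictMono

theorem mul_lt_mul_left_iff_of_ne_zero {R : Type*} [Ring R] [LinearOrder R] [IsStrictOrderedRing R]
    {a b c : R} (ha : a ≠ 0) :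
    a * b < a * c ↔ (0 < a → b < c) ∧ (a < 0 → c < b) := by
  rcases ha.lt_or_gt with hneg | hpos
  · simp [mul_lt_mul_left_of_neg hneg, hneg, hneg.not_gt]
  · simp [mul_lt_mul_iff_right₀ hpos, hpos, hpos.not_gt]

theorem ple_iff_toLex_abs_le {a b : ℤ} : ple a b ↔ toLex (|a|, a) ≤ toLex (|b|, b) := by
  have habs : |a| = |b| ∧ a ≤ b ↔ a = b ∨ |a| = |b| ∧ a < 0 ∧ 0 < b := by grind
  rw [ple, Prod.Lex.toLex_le_toLex, habs, or_left_comm]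

/-- The key by which an enriched partition `f` sorts the letters of its word: first the value `f i`
in the order `⪯`, encoded as `(|f i|, f i)`, then the letter `i`, multiplied by `f i` so that ties
are broken upwards at positive values and downwards at negative ones. -/
def enrichedKey {n : ℕ} (f : Fin n → ℤ) (i : Fin n) : (ℤ ×ₗ ℤ) ×ₗ ℤ :=
  toLex (toLex (|f i|, f i), f i * i)

section EnrichedKey

variable {n : ℕ} {f : Fin n → ℤ}

theorem enrichedKey_injective (hf : ∀ i, f i ≠ 0) : Function.Injective (enrichedKey f) := by
  intro i j h
  obtain ⟨⟨-, hval⟩, hmul⟩ : (|f i| = |f j| ∧ f i = f j) ∧ f i * i = f j * j := by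
    simpa only [enrichedKey, EmbeddingLike.apply_eq_iff_eq, Prod.mk.injEq] using h
  rw [← hval] at hmul
  have hcast : (i : ℤ) = j := mul_left_cancel₀ (hf i) hmul
  exact Fin.ext (mod_cast hcast)

theorem enrichedKey_lt_iff {i j : Fin n} (hi : f i ≠ 0) :
    enrichedKey f i < enrichedKey f j ↔
      ple (f i) (f j) ∧ (f i = f j → (0 < f i → i < j) ∧ (f i < 0 → j < i)) := by
  have hval : toLex (|f i|, f i) = toLex (|f j|, f j) ↔ f i = f j := by
    rw [EmbeddingLike.apply_eq_iff_eq, Prod.mk.injEq, and_iff_right_iff_imp]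
    exact congrArg abs
  have htie (h : f i = f j) :
      f i * i < f j * j ↔ (0 < f i → i < j) ∧ (f i < 0 → j < i) := by
    rw [← h, mul_lt_mul_left_iff_of_ne_zero hi, Nat.cast_lt, Nat.cast_lt, Fin.val_fin_lt,
      Fin.val_fin_lt]
  rw [enrichedKey, enrichedKey, Prod.Lex.toLex_lt_toLex', ← ple_iff_toLex_abs_le, hval]
  exact and_congr_right' (forall_congr' htie)

theorem isEnrichedLin_iff_strictMono (hf : ∀ i, f i ≠ 0) {v : Fin n → Fin n} :
    IsEnrichedLin n v f ↔ StrictMono (enrichedKey f ∘ v) := by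
  simp only [IsEnrichedLin, strictMono_iff_lt_of_val_add_one_eq, Function.comp_apply,
    enrichedKey_lt_iff (hf _), and_iff_right hf]

end EnrichedKey

/-- for `n ≥ 1`, every `f : [n] → ℙ′` is an enriched `w`-partition for
exactly one permutation `w ∈ S_n`. -/
theorem stmt0 (n : ℕ) (hn : 1 ≤ n) (f : Fin n → ℤ) (hf : ∀ i, f i ≠ 0) :
    ∃! w : Equiv.Perm (Fin n), IsEnrichedLin n ⇑w f := by
  simpa only [isEnrichedLin_iff_strictMono hf] using
    existsUnique_perm_strictMono_comp (enrichedKey_injective hf)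
end

section
/- Let w ∈ S_n. Among the n rotations v ∈ [w] of w, exactly 2·cpk(w) of them satisfy pk(v) = cpk(w) − 1 (namely those that begin or end with a cyclic peak value), and the remaining n − 2·cpk(w) of them satisfy pk(v) = cpk(w). -/
/-- The `i`-th rotation of the word `w = w 0, w 1, …, w (n-1)` (0-indexed):
`rotF n i w` has `j`-th letter `w (j + i)`, indices mod `n`. -/
def rotF (n : ℕ) (i : Fin n) (w : Fin n → Fin n) : Fin n → Fin n :=
  fun j => w (j + i)

/-- The cyclic descent set `cDes w` (0-indexed positions, indices mod `n`):
positions `i` with `w i > w (i+1)`. -/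
def cDesF (n : ℕ) [NeZero n] (w : Fin n → Fin n) : Finset (Fin n) :=
  Finset.univ.filter fun i => w (i + 1) < w i

/-- The cyclic peak set `cPk w` (0-indexed positions, indices mod `n`):
positions `i` with `w (i-1) < w i > w (i+1)`. -/
def cPkF (n : ℕ) [NeZero n] (w : Fin n → Fin n) : Finset (Fin n) :=
  Finset.univ.filter fun i => w (i - 1) < w i ∧ w (i + 1) < w i

/-- The linear peak set `Pk w` (0-indexed: positions `i` with `1 ≤ i ≤ n-2`,
i.e. `2 ≤ i+1 ≤ n-1` in 1-indexed terms, such that `w (i-1) < w i > w (i+1)`). -/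
def PkF (n : ℕ) [NeZero n] (w : Fin n → Fin n) : Finset (Fin n) :=
  Finset.univ.filter fun i =>
    0 < (i : ℕ) ∧ (i : ℕ) < n - 1 ∧ w (i - 1) < w i ∧ w (i + 1) < w i

/-!
The linear peaks of a word are its cyclic peaks at positions other than the first and the last.
These two positions are cyclically adjacent, so at most one of them is a cyclic peak: passing from
cyclic to linear peaks loses one peak if the word begins or ends with a cyclic peak, and none
otherwise. Rotation only shifts the cyclic peaks; each of them comes first in exactly one rotation
and last in exactly one rotation, and these rotations are all different.
-/

theorem card_inter_pair_pos {α : Type*} [DecidableEq α] {s : Finset α} {a b : α} :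
    0 < (s ∩ {a, b}).card ↔ a ∈ s ∨ b ∈ s := by
  simp [Finset.card_pos, Finset.Nonempty, and_or_left, exists_or]

section Peaks

variable {n : ℕ} [NeZero n] {w : Fin n → Fin n} {i j : Fin n}

theorem mem_cPkF : j ∈ cPkF n w ↔ w (j - 1) < w j ∧ w (j + 1) < w j := by
  simp [cPkF]

theorem mem_cPkF_rotF : j ∈ cPkF n (rotF n i w) ↔ j + i ∈ cPkF n w := by
  simp only [mem_cPkF, rotF, sub_add_eq_add_sub, add_right_comm]

theorem card_cPkF_rotF (w : Fin n → Fin n) (i : Fin n) :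
    (cPkF n (rotF n i w)).card = (cPkF n w).card :=
  Finset.card_equiv (Equiv.addRight i) fun _ => mem_cPkF_rotF

theorem sub_one_notMem_cPkF (hj : j ∈ cPkF n w) : j - 1 ∉ cPkF n w := by
  intro hpred
  have hdesc : w j < w (j - 1) := by simpa using (mem_cPkF.1 hpred).2
  exact lt_asymm (mem_cPkF.1 hj).1 hdesc

theorem card_cPkF_inter_pair_le_one (w : Fin n → Fin n) (j : Fin n) :
    (cPkF n w ∩ {j, j - 1}).card ≤ 1 := by
  by_cases hj : j ∈ cPkF n w
  · rw [Finset.inter_insert_of_mem hj, Finset.inter_singleton_of_notMem (sub_one_notMem_cPkF hj)]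
    simp
  · rw [Finset.inter_insert_of_notMem hj]
    exact Finset.card_le_card Finset.inter_subset_right

theorem val_lt_sub_one_iff_ne_neg_one : (j : ℕ) < n - 1 ↔ j ≠ -1 := by
  obtain ⟨m, rfl⟩ := Nat.exists_eq_succ_of_ne_zero (NeZero.ne n)
  rw [Ne, Fin.ext_iff, Fin.coe_neg_one]
  omega

theorem PkF_eq_cPkF_sdiff (w : Fin n → Fin n) : PkF n w = cPkF n w \ {0, 0 - 1} := by
  ext j
  simp only [PkF, Finset.mem_filter_univ, Finset.mem_sdiff, Finset.mem_insert,
    Finset.mem_singleton, mem_cPkF, zero_sub, val_lt_sub_one_iff_ne_neg_one,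
    Fin.val_pos_iff, Fin.pos_iff_ne_zero]
  tauto

theorem card_PkF_add_card_cPkF_inter (w : Fin n → Fin n) :
    (PkF n w).card + (cPkF n w ∩ {0, 0 - 1}).card = (cPkF n w).card := by
  rw [PkF_eq_cPkF_sdiff, Finset.card_sdiff_add_card_inter]

theorem card_PkF_eq_card_cPkF_sub_one_iff :
    ((PkF n w).card : ℤ) = (cPkF n w).card - 1 ↔ 0 ∈ cPkF n w ∨ 0 - 1 ∈ cPkF n w := by
  rw [← card_inter_pair_pos]
  have hle := card_cPkF_inter_pair_le_one w 0
  have hadd := card_PkF_add_card_cPkF_inter w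
  omega

theorem card_PkF_eq_card_cPkF_iff :
    (PkF n w).card = (cPkF n w).card ↔ ¬(0 ∈ cPkF n w ∨ 0 - 1 ∈ cPkF n w) := by
  rw [← card_inter_pair_pos]
  have hadd := card_PkF_add_card_cPkF_inter w
  omega

theorem card_filter_mem_cPkF_rotF (w : Fin n → Fin n) (j : Fin n) :
    (Finset.univ.filter fun i => j ∈ cPkF n (rotF n i w)).card = (cPkF n w).card :=
  Finset.card_equiv (Equiv.addLeft j) fun i => by simp [mem_cPkF_rotF]

theorem card_filter_mem_or_sub_one_mem_cPkF_rotF (w : Fin n → Fin n) (j : Fin n) :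
    (Finset.univ.filter fun i =>
      j ∈ cPkF n (rotF n i w) ∨ j - 1 ∈ cPkF n (rotF n i w)).card = 2 * (cPkF n w).card := by
  have hdisj : Disjoint (Finset.univ.filter fun i => j ∈ cPkF n (rotF n i w))
      (Finset.univ.filter fun i => j - 1 ∈ cPkF n (rotF n i w)) :=
    Finset.disjoint_filter.2 fun _ _ => sub_one_notMem_cPkF
  rw [Finset.filter_or, Finset.card_union_of_disjoint hdisj, card_filter_mem_cPkF_rotF,
    card_filter_mem_cPkF_rotF, two_mul]

end Peaks

theorem stmt6_general (n : ℕ) [NeZero n] (w : Fin n → Fin n) :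
    ((Finset.univ : Finset (Fin n)).filter fun i =>
        ((PkF n (rotF n i w)).card : ℤ) = ((cPkF n w).card : ℤ) - 1).card
      = 2 * (cPkF n w).card ∧
    ((Finset.univ : Finset (Fin n)).filter fun i =>
        ((PkF n (rotF n i w)).card : ℤ) = ((cPkF n w).card : ℤ)).card
      = n - 2 * (cPkF n w).card ∧
    ∀ i : Fin n, ((PkF n (rotF n i w)).card : ℤ) = ((cPkF n w).card : ℤ) - 1 ↔
      ((0 : Fin n) ∈ cPkF n (rotF n i w) ∨ (0 - 1 : Fin n) ∈ cPkF n (rotF n i w)) := by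
  have hloss (i : Fin n) := card_PkF_eq_card_cPkF_sub_one_iff (w := rotF n i w)
  have hkeep (i : Fin n) := card_PkF_eq_card_cPkF_iff (w := rotF n i w)
  simp only [card_cPkF_rotF] at hloss hkeep
  have hcount := card_filter_mem_or_sub_one_mem_cPkF_rotF w 0
  refine ⟨by simpa only [hloss] using hcount, ?_, hloss⟩
  simp only [Nat.cast_inj, hkeep]
  rw [← Finset.compl_filter, Finset.card_compl, hcount, Fintype.card_fin]

/-- among the `n` rotations `v = rot_i w` of `w`, exactly `2·cpk w`
satisfy `pk v = cpk w − 1` — namely those beginning or ending with a cyclic peak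
value, i.e. those whose first (0-indexed position `0`) or last (position `n-1`,
i.e. `0 - 1` mod `n`) position is a cyclic peak — and the remaining `n − 2·cpk w`
rotations satisfy `pk v = cpk w`. -/
theorem stmt6 (n : ℕ) [NeZero n] (w : Equiv.Perm (Fin n)) :
    ((Finset.univ : Finset (Fin n)).filter fun i =>
        ((PkF n (rotF n i ⇑w)).card : ℤ) = ((cPkF n ⇑w).card : ℤ) - 1).card
      = 2 * (cPkF n ⇑w).card ∧
    ((Finset.univ : Finset (Fin n)).filter fun i =>
        ((PkF n (rotF n i ⇑w)).card : ℤ) = ((cPkF n ⇑w).card : ℤ)).card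
      = n - 2 * (cPkF n ⇑w).card ∧
    ∀ i : Fin n, ((PkF n (rotF n i ⇑w)).card : ℤ) = ((cPkF n ⇑w).card : ℤ) - 1 ↔
      ((0 : Fin n) ∈ cPkF n (rotF n i ⇑w) ∨ (0 - 1 : Fin n) ∈ cPkF n (rotF n i ⇑w)) :=
  stmt6_general n w
end

section
/- Let w, w′ ∈ S_n and suppose cPk(w′) = cPk(w) + i (a cyclic shift mod n) for some i ∈ ℤ. Then for every finitely supported function d : ℙ → ℕ, the number of f ∈ E^tor([w]) with weight d_f = d equals the number of f ∈ E^tor([w′]) with weight d_f = d. (Equivalently, Δ^cyc_{[w]} depends only on the cyclic peak set cPk w up to cyclic shift.) -/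
/-! Read `f` along the circular word: `g c = f (w c)`, with the word cut open just before some
position `i`. Then `|g|` weakly increases away from the cut, and each tie `|g c| = |g (c + 1)|`
forces exactly one sign: that of the larger of the letters `w c`, `w (c + 1)`, being `+` at an
ascent and `-` at a descent. Two ties force the same letter only at a cyclic peak, and then they
contradict each other. Hence, for a given cut and given absolute values, there are `2 ^ (n - #ties)`
choices of signs, or none if some cyclic peak is tied on both sides. Finally the cut is determined
by `g`: two different cuts would make all the `|g c|` equal and force both signs on the largest
letter. -/

open Finset

section Weight

variable {ι κ : Type*} [Fintype ι] [Fintype κ]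

/-- The weight `d_f` of `f`: how often each absolute value occurs. -/
def weight (f : ι → ℤ) (m : ℕ) : ℕ :=
  #{i | (f i).natAbs = m}

lemma weight_comp_equiv (f : ι → ℤ) (e : κ ≃ ι) : weight (f ∘ e) = weight f := by
  funext m
  exact card_equiv e (by simp)

lemma weight_eq_of_natAbs_comp_eq {f g : ι → ℤ} (h : Int.natAbs ∘ f = Int.natAbs ∘ g) :
    weight f = weight g := by
  funext m
  simp only [weight, fun i => show (f i).natAbs = (g i).natAbs from congrFun h i]

lemma card_weight_congr {A B : Set (ι → ℤ)} (e : A ≃ B)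
    (he : ∀ f, weight (e f).1 = weight f.1) (d : ℕ → ℕ) :
    Nat.card {f // f ∈ A ∧ ∀ m, weight f m = d m} =
      Nat.card {f // f ∈ B ∧ ∀ m, weight f m = d m} := by
  let W (f : ι → ℤ) : Prop := ∀ m, weight f m = d m
  have e' : {f : A // W f.1} ≃ {f : B // W f.1} := e.subtypeEquiv fun f => by simp only [W, he]
  exact Nat.card_congr ((Equiv.subtypeSubtypeEquivSubtypeInter (· ∈ A) W).symm.trans
    (e'.trans (Equiv.subtypeSubtypeEquivSubtypeInter (· ∈ B) W)))

end Weight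

section Signings

variable {ι : Type*} [Fintype ι] [DecidableEq ι]

/-- The integer-valued functions with absolute values `x` that are positive on `P` and negative
on `N`. -/
def signings (x : ι → ℕ) (P N : Finset ι) : Finset (ι → ℤ) :=
  Fintype.piFinset fun p => {a ∈ {(x p : ℤ), -(x p : ℤ)} | (p ∈ P → 0 < a) ∧ (p ∈ N → a < 0)}

lemma mem_signings {x : ι → ℕ} {P N : Finset ι} {g : ι → ℤ} :
    g ∈ signings x P N ↔
      Int.natAbs ∘ g = x ∧ (∀ p ∈ P, 0 < g p) ∧ ∀ p ∈ N, g p < 0 := by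
  simp only [signings, Fintype.mem_piFinset, mem_filter, mem_insert, mem_singleton, forall_and,
    ← Int.natAbs_eq_iff, funext_iff, Function.comp_apply]

lemma card_signings {x : ι → ℕ} (hx : ∀ p, x p ≠ 0) (P N : Finset ι) :
    #(signings x P N) = if Disjoint P N then 2 ^ (Fintype.card ι - (#P + #N)) else 0 := by
  split_ifs with hPN
  · have hfactor (p : ι) :
        #{a ∈ {(x p : ℤ), -(x p : ℤ)} | (p ∈ P → 0 < a) ∧ (p ∈ N → a < 0)} =
          if p ∈ (P ∪ N)ᶜ then 2 else 1 := by
      have hpos : (0 : ℤ) < x p := by exact_mod_cast Nat.pos_of_ne_zero (hx p)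
      have hdisj : p ∈ P → p ∉ N := fun h => disjoint_left.1 hPN h
      by_cases hP : p ∈ P <;> by_cases hN : p ∈ N <;>
        simp_all [filter_insert, filter_singleton, hpos.not_gt]
    rw [signings, Fintype.card_piFinset, prod_congr rfl fun p _ => hfactor p, prod_ite_mem,
      univ_inter, prod_const, card_compl, card_union_of_disjoint hPN]
  · obtain ⟨p, hP, hN⟩ := not_disjoint_iff.1 hPN
    refine card_eq_zero.2 (eq_empty_of_forall_notMem fun g hg => ?_)
    obtain ⟨-, hpos, hneg⟩ := mem_signings.1 hg
    exact (hpos p hP).not_gt (hneg p hN)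

end Signings

section EnrichedStep

variable {α : Type*} [LinearOrder α]

/-- The condition that an enriched partition imposes on consecutive letters `x`, `y` with
values `a`, `b`. -/
def EnrichedStep (x y : α) (a b : ℤ) : Prop :=
  ple a b ∧ (a = b → (0 < a → x < y) ∧ (a < 0 → y < x))

lemma enrichedStep_iff {x y : α} (hxy : x ≠ y) {a b : ℤ} (hb : b ≠ 0) :
    EnrichedStep x y a b ↔ a.natAbs ≤ b.natAbs ∧
      (a.natAbs = b.natAbs → (x < y → 0 < b) ∧ (y < x → a < 0)) := by
  rcases lt_or_gt_of_ne hxy with h | h <;>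
    simp only [EnrichedStep, ple, Int.abs_eq_natAbs, h, h.not_gt, true_imp_iff, false_imp_iff,
      imp_true_iff, imp_false, true_and, and_true] <;>
    omega

end EnrichedStep

lemma apply_eq_apply_perm_of_le {ι M : Type*} [Finite ι] [AddCommMonoid M] [PartialOrder M]
    [IsOrderedCancelAddMonoid M] (σ : Equiv.Perm ι) {x : ι → M} (h : ∀ c, x c ≤ x (σ c)) (c : ι) :
    x c = x (σ c) := by
  have := Fintype.ofFinite ι
  exact (sum_eq_sum_iff_of_le fun c _ => h c).1 (Equiv.sum_comp σ x).symm c (mem_univ c)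

lemma apply_ne_apply_add_one {n : ℕ} [NeZero n] {α : Type*} {w : Fin n → α} (hw : w.Injective)
    {i c : Fin n} (hc : c + 1 ≠ i) : w c ≠ w (c + 1) := by
  refine hw.ne fun h => hc ?_
  obtain rfl : n = 1 := Fin.one_eq_zero_iff.1 (left_eq_add.1 h)
  exact Subsingleton.elim _ _

section Cyclic

variable {n : ℕ} [NeZero n] {α β : Type*} [LinearOrder α] [LinearOrder β]

/-- Position `p` is a peak of the circular word `w`; the letters may come from any linear order. -/
def IsCyclicPeak (w : Fin n → α) (p : Fin n) : Prop :=
  w (p - 1) < w p ∧ w (p + 1) < w p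

lemma mem_cPkF_s9 {w : Fin n → Fin n} {p : Fin n} : p ∈ cPkF n w ↔ IsCyclicPeak w p := by
  simp [cPkF, IsCyclicPeak]

lemma isCyclicPeak_rotF (w : Fin n → Fin n) (i p : Fin n) :
    IsCyclicPeak (rotF n i w) p ↔ IsCyclicPeak w (p + i) := by
  simp only [IsCyclicPeak, rotF, sub_add_eq_add_sub, add_right_comm]

/-- The positions, among those `c` for which `(c, c + 1)` lies in `T`, whose sign is forced
positive by an ascent. -/
def forcedPos (w : Fin n → α) (T : Finset (Fin n)) : Finset (Fin n) :=
  {c ∈ T | w c < w (c + 1)}.map (Equiv.addRight 1).toEmbedding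

/-- The positions in `T` whose sign is forced negative by a descent. -/
def forcedNeg (w : Fin n → α) (T : Finset (Fin n)) : Finset (Fin n) :=
  {c ∈ T | w (c + 1) < w c}

lemma mem_forcedPos {w : Fin n → α} {T : Finset (Fin n)} {p : Fin n} :
    p ∈ forcedPos w T ↔ p - 1 ∈ T ∧ w (p - 1) < w p := by
  simp [forcedPos, mem_map_equiv, ← sub_eq_add_neg]

lemma mem_forcedNeg {w : Fin n → α} {T : Finset (Fin n)} {p : Fin n} :
    p ∈ forcedNeg w T ↔ p ∈ T ∧ w (p + 1) < w p :=
  mem_filter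

lemma card_forcedPos_add_card_forcedNeg {w : Fin n → α} {T : Finset (Fin n)}
    (hw : ∀ c ∈ T, w c ≠ w (c + 1)) : #(forcedPos w T) + #(forcedNeg w T) = #T := by
  have hneg : forcedNeg w T = {c ∈ T | ¬ w c < w (c + 1)} :=
    filter_congr fun c hc => by rw [not_lt, (hw c hc).symm.le_iff_lt]
  rw [hneg, forcedPos, card_map, card_filter_add_card_filter_not]

lemma disjoint_forcedPos_forcedNeg_iff {w : Fin n → α} {T : Finset (Fin n)} :
    Disjoint (forcedPos w T) (forcedNeg w T) ↔ ∀ p, p - 1 ∈ T → p ∈ T → ¬ IsCyclicPeak w p := by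
  simp only [disjoint_left, mem_forcedPos, mem_forcedNeg]
  exact ⟨fun h p hl hr hp => h ⟨hl, hp.1⟩ ⟨hr, hp.2⟩,
    fun h p hl hr => h p hl.1 hr.1 ⟨hl.2, hr.2⟩⟩

lemma card_signings_forced_congr {w : Fin n → α} {w' : Fin n → β} {T : Finset (Fin n)}
    (hw : ∀ c ∈ T, w c ≠ w (c + 1)) (hw' : ∀ c ∈ T, w' c ≠ w' (c + 1))
    (hpk : ∀ p, IsCyclicPeak w p ↔ IsCyclicPeak w' p) {x : Fin n → ℕ} (hx : ∀ p, x p ≠ 0) :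
    #(signings x (forcedPos w T) (forcedNeg w T)) =
      #(signings x (forcedPos w' T) (forcedNeg w' T)) := by
  have hdisj : Disjoint (forcedPos w T) (forcedNeg w T) ↔
      Disjoint (forcedPos w' T) (forcedNeg w' T) := by
    simp only [disjoint_forcedPos_forcedNeg_iff, hpk]
  simp only [card_signings hx, card_forcedPos_add_card_forcedNeg hw,
    card_forcedPos_add_card_forcedNeg hw', if_congr hdisj rfl rfl]

/-- The enriched partitions of the circular word `w` cut open just before position `i`. They are
functions of the position in `w`, not of the letter at that position. -/
def IsCutEnriched (w : Fin n → α) (i : Fin n) (g : Fin n → ℤ) : Prop :=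
  (∀ c, g c ≠ 0) ∧ ∀ c, c + 1 ≠ i → EnrichedStep (w c) (w (c + 1)) (g c) (g (c + 1))

lemma IsCutEnriched.step {w : Fin n → α} (hw : w.Injective) {i c : Fin n} {g : Fin n → ℤ}
    (h : IsCutEnriched w i g) (hc : c + 1 ≠ i) :
    (g c).natAbs ≤ (g (c + 1)).natAbs ∧ ((g c).natAbs = (g (c + 1)).natAbs →
      (w c < w (c + 1) → 0 < g (c + 1)) ∧ (w (c + 1) < w c → g c < 0)) :=
  (enrichedStep_iff (apply_ne_apply_add_one hw hc) (h.1 _)).1 (h.2 c hc)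

/-- The positions `c` with `x c = x (c + 1)`, other than the one just before the cut at `i`. -/
def ties (i : Fin n) (x : Fin n → ℕ) : Finset (Fin n) :=
  {c | c + 1 ≠ i ∧ x c = x (c + 1)}

lemma mem_ties {i c : Fin n} {x : Fin n → ℕ} : c ∈ ties i x ↔ c + 1 ≠ i ∧ x c = x (c + 1) := by
  simp [ties]

lemma isCutEnriched_and_natAbs_comp_eq_iff {w : Fin n → α} (hw : w.Injective) {i : Fin n}
    {g : Fin n → ℤ} {x : Fin n → ℕ} :
    IsCutEnriched w i g ∧ Int.natAbs ∘ g = x ↔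
      ((∀ p, x p ≠ 0) ∧ ∀ c, c + 1 ≠ i → x c ≤ x (c + 1)) ∧
        g ∈ signings x (forcedPos w (ties i x)) (forcedNeg w (ties i x)) := by
  rw [mem_signings]
  constructor
  · rintro ⟨h, rfl⟩
    refine ⟨⟨fun p => Int.natAbs_ne_zero.2 (h.1 p), fun c hc => (h.step hw hc).1⟩, rfl,
      fun p hp => ?_, fun p hp => ?_⟩
    · obtain ⟨hT, hlt⟩ := mem_forcedPos.1 hp
      obtain ⟨hc, htie⟩ := mem_ties.1 hT
      have hsign := (h.step hw hc).2 htie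
      rw [sub_add_cancel] at hsign
      exact hsign.1 hlt
    · obtain ⟨hT, hlt⟩ := mem_forcedNeg.1 hp
      obtain ⟨hc, htie⟩ := mem_ties.1 hT
      exact ((h.step hw hc).2 htie).2 hlt
  · rintro ⟨⟨h0, hmono⟩, rfl, hpos, hneg⟩
    have h0' p : g p ≠ 0 := Int.natAbs_ne_zero.1 (h0 p)
    refine ⟨⟨h0', fun c hc => ?_⟩, rfl⟩
    refine (enrichedStep_iff (apply_ne_apply_add_one hw hc) (h0' _)).2 ⟨hmono c hc, fun htie => ?_⟩
    have hT : c ∈ ties i (Int.natAbs ∘ g) := mem_ties.2 ⟨hc, htie⟩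
    exact ⟨fun hlt => hpos (c + 1) (mem_forcedPos.2 (by simpa using ⟨hT, hlt⟩)),
      fun hlt => hneg c (mem_forcedNeg.2 ⟨hT, hlt⟩)⟩

lemma nonempty_isCutEnriched_equiv {w : Fin n → α} {w' : Fin n → β} (hw : w.Injective)
    (hw' : w'.Injective) (hpk : ∀ p, IsCyclicPeak w p ↔ IsCyclicPeak w' p) (i : Fin n)
    (x : Fin n → ℕ) :
    Nonempty ({g // IsCutEnriched w i g ∧ Int.natAbs ∘ g = x} ≃
      {g // IsCutEnriched w' i g ∧ Int.natAbs ∘ g = x}) := by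
  simp only [isCutEnriched_and_natAbs_comp_eq_iff hw, isCutEnriched_and_natAbs_comp_eq_iff hw']
  by_cases hx : (∀ p, x p ≠ 0) ∧ ∀ c, c + 1 ≠ i → x c ≤ x (c + 1)
  · simp only [and_iff_right hx]
    exact ⟨equivOfCardEq (card_signings_forced_congr
      (fun c hc => apply_ne_apply_add_one hw (mem_ties.1 hc).1)
      (fun c hc => apply_ne_apply_add_one hw' (mem_ties.1 hc).1) hpk hx.1)⟩
  · simp only [hx, false_and]
    exact ⟨Equiv.refl _⟩

lemma IsCutEnriched.cut_unique {w : Fin n → α} (hw : w.Injective) {i i' : Fin n} {g : Fin n → ℤ}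
    (h : IsCutEnriched w i g) (h' : IsCutEnriched w i' g) : i = i' := by
  by_contra hne
  have hoff c : ∃ j, IsCutEnriched w j g ∧ c + 1 ≠ j := by
    by_cases hc : c + 1 = i
    · exact ⟨i', h', hc ▸ hne⟩
    · exact ⟨i, h, hc⟩
  have hle c : (g c).natAbs ≤ (g (c + 1)).natAbs := by
    obtain ⟨j, hj, hc⟩ := hoff c
    exact (hj.step hw hc).1
  have htie c : (g c).natAbs = (g (c + 1)).natAbs :=
    apply_eq_apply_perm_of_le (Equiv.addRight 1) (x := fun c => (g c).natAbs) hle c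
  obtain ⟨p, hp⟩ := Finite.exists_max w
  have hpos : 0 < g p := by
    obtain ⟨j, hj, hc⟩ := hoff (p - 1)
    have hlt := (hp (p - 1)).lt_of_ne (by simpa using apply_ne_apply_add_one hw hc)
    simpa [hlt] using ((hj.step hw hc).2 (htie _)).1
  have hneg : g p < 0 := by
    obtain ⟨j, hj, hc⟩ := hoff p
    exact ((hj.step hw hc).2 (htie p)).2 ((hp _).lt_of_ne (apply_ne_apply_add_one hw hc).symm)
  exact hpos.not_gt hneg

/-- The functions that are enriched for some cut of the circular word `w`: this is `E^tor([w])`,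
with `f` replaced by the function `f ∘ w` of the position. -/
def cyclicEnriched (w : Fin n → α) : Set (Fin n → ℤ) :=
  {g | ∃ i, IsCutEnriched w i g}

/-- The position just before which `g` cuts the circular word `w` open. -/
noncomputable def cut {w : Fin n → α} (g : cyclicEnriched w) : Fin n :=
  g.2.choose

lemma cut_eq_iff {w : Fin n → α} (hw : w.Injective) {g : cyclicEnriched w} {i : Fin n} :
    cut g = i ↔ IsCutEnriched w i g :=
  ⟨fun h => h ▸ g.2.choose_spec, fun h => g.2.choose_spec.cut_unique hw h⟩

/-- The functions in `cyclicEnriched w` with prescribed cut and absolute values, as those enriched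
for that cut. -/
def cutFiberEquiv {w : Fin n → α} (hw : w.Injective) (k : Fin n × (Fin n → ℕ)) :
    {g : cyclicEnriched w // (cut g, Int.natAbs ∘ g.1) = k} ≃
      {g // IsCutEnriched w k.1 g ∧ Int.natAbs ∘ g = k.2} :=
  (Equiv.subtypeEquivRight fun g => by rw [Prod.ext_iff, cut_eq_iff hw]).trans
    (Equiv.subtypeSubtypeEquivSubtype (p := (· ∈ cyclicEnriched w))
      (q := fun g => IsCutEnriched w k.1 g ∧ Int.natAbs ∘ g = k.2) fun h => ⟨k.1, h.1⟩)

theorem exists_cyclicEnriched_equiv {w : Fin n → α} {w' : Fin n → β} (hw : w.Injective)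
    (hw' : w'.Injective) (hpk : ∀ p, IsCyclicPeak w p ↔ IsCyclicPeak w' p) :
    ∃ e : cyclicEnriched w ≃ cyclicEnriched w', ∀ g, Int.natAbs ∘ (e g).1 = Int.natAbs ∘ g.1 := by
  let e k := (cutFiberEquiv hw k).trans
    ((nonempty_isCutEnriched_equiv hw hw' hpk k.1 k.2).some.trans (cutFiberEquiv hw' k).symm)
  exact ⟨Equiv.ofFiberEquiv e, fun g => (Prod.ext_iff.1 (Equiv.ofFiberEquiv_map e g)).2⟩

end Cyclic

section Toric

variable {n : ℕ} [NeZero n]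

lemma val_add_one_eq_val_iff {j k : Fin n} : (j : ℕ) + 1 = k ↔ k = j + 1 ∧ j + 1 ≠ 0 := by
  obtain ⟨m, rfl⟩ := Nat.exists_eq_succ_of_ne_zero (NeZero.ne n)
  rw [Ne, Fin.ext_iff, Fin.ext_iff, Fin.val_add_one]
  split_ifs with hj
  · simp [hj, k.2.ne']
  · simp [eq_comm]

lemma isEnrichedLin_rotF_iff {w : Fin n → Fin n} {i : Fin n} {f : Fin n → ℤ} (hw : w.Surjective) :
    IsEnrichedLin n (rotF n i w) f ↔ IsCutEnriched w i (f ∘ w) := by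
  refine and_congr hw.forall ⟨fun H c hc => ?_, fun H j k hjk => ?_⟩
  · have hcut : c - i + 1 ≠ 0 := by rwa [sub_add_eq_add_sub, sub_ne_zero]
    have := H (c - i) (c - i + 1) (val_add_one_eq_val_iff.2 ⟨rfl, hcut⟩)
    simpa [rotF, EnrichedStep, add_right_comm _ 1 i] using this
  · obtain ⟨rfl, hcut⟩ := val_add_one_eq_val_iff.1 hjk
    have := H (j + i) (by simpa [add_right_comm _ i 1] using hcut)
    simpa [rotF, EnrichedStep, add_right_comm _ i 1] using this

/-- The set `E^tor([w])` of toric enriched partitions, as functions of the letter. -/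
def toricEnriched (w : Fin n → Fin n) : Set (Fin n → ℤ) :=
  {f | ∃ i, IsEnrichedLin n (rotF n i w) f}

lemma toricEnriched_rotF (w : Fin n → Fin n) (i : Fin n) :
    toricEnriched (rotF n i w) = toricEnriched w := by
  have hrot (j : Fin n) : rotF n j (rotF n i w) = rotF n (j + i) w := by
    funext k
    simp only [rotF, add_assoc]
  ext f
  exact (Equiv.addRight i).exists_congr fun j => by rw [hrot, Equiv.coe_addRight]

/-- Reading a toric enriched partition along the circular word: `f ↦ f ∘ w`. -/
def toricEnrichedEquiv (w : Equiv.Perm (Fin n)) : toricEnriched w ≃ cyclicEnriched w :=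
  (w.arrowCongr (Equiv.refl ℤ)).symm.subtypeEquiv fun _ =>
    exists_congr fun _ => isEnrichedLin_rotF_iff w.surjective

lemma weight_toricEnrichedEquiv (w : Equiv.Perm (Fin n)) (f : toricEnriched w) :
    weight (toricEnrichedEquiv w f).1 = weight f.1 :=
  weight_comp_equiv f.1 w

theorem exists_toricEnriched_equiv (w w' : Equiv.Perm (Fin n))
    (hpk : ∀ p, IsCyclicPeak w p ↔ IsCyclicPeak w' p) :
    ∃ e : toricEnriched w ≃ toricEnriched w', ∀ f, weight (e f).1 = weight f.1 := by
  obtain ⟨e, he⟩ := exists_cyclicEnriched_equiv w.injective w'.injective hpk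
  refine ⟨(toricEnrichedEquiv w).trans (e.trans (toricEnrichedEquiv w').symm), fun f => ?_⟩
  rw [← weight_toricEnrichedEquiv w', ← weight_toricEnrichedEquiv w]
  simpa using weight_eq_of_natAbs_comp_eq (he (toricEnrichedEquiv w f))

end Toric

/-- if `cPk w'` is a cyclic shift of `cPk w`, then for every finitely
supported weight `d : ℙ → ℕ` the number of `f ∈ E^tor([w])` with `d_f = d` equals
the number of `f ∈ E^tor([w'])` with `d_f = d`; equivalently, `Δ^cyc_{[w]}`
depends only on `cPk w` up to cyclic shift. -/
theorem stmt9 (n : ℕ) [NeZero n] (w w' : Equiv.Perm (Fin n))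
    (h : ∃ i : Fin n, cPkF n ⇑w' = (cPkF n ⇑w).image (· + i))
    (d : ℕ →₀ ℕ) (hd0 : d 0 = 0) :
    Nat.card {f : Fin n → ℤ //
        (∃ i : Fin n, IsEnrichedLin n (rotF n i ⇑w) f) ∧
        (∀ m : ℕ, (Finset.univ.filter (fun i => (f i).natAbs = m)).card = d m)} =
    Nat.card {f : Fin n → ℤ //
        (∃ i : Fin n, IsEnrichedLin n (rotF n i ⇑w') f) ∧
        (∀ m : ℕ, (Finset.univ.filter (fun i => (f i).natAbs = m)).card = d m)} := by
  obtain ⟨i, hi⟩ := h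
  have hpk (p : Fin n) : IsCyclicPeak w p ↔ IsCyclicPeak (rotF n i w') p := by
    rw [isCyclicPeak_rotF, ← mem_cPkF_s9, ← mem_cPkF_s9, hi]
    simp
  obtain ⟨e, he⟩ := exists_toricEnriched_equiv w ((Equiv.addRight i).trans w') hpk
  let e' : toricEnriched w ≃ toricEnriched w' := e.trans (Equiv.setCongr (toricEnriched_rotF w' i))
  have he' (f : toricEnriched w) : weight (e' f).1 = weight f.1 := he f
  exact card_weight_congr e' he' d
end

section
/- Let n ≥ 1 and let S ⊆ [n] be a cyclic peak set in [n], i.e. S = cPk(w) for some w ∈ S_n. Then for every F ⊆ [n]: the number of subsets E ⊆ F with S ⊆ E △ (E+1) equals 2^{|F|−|S|} if S ⊆ F ∪ (F+1), and equals 0 otherwise. Here △ denotes symmetric difference and E+1 is the cyclic shift of E by 1 modulo n. -/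
/-- Cyclic shift of a subset `E` of `ℤ/n` (0-indexed model of `[n]`) by `i`. -/
def shiftF (n : ℕ) (E : Finset (Fin n)) (i : Fin n) : Finset (Fin n) :=
  E.image (· + i)

/-!
For an injective map `f`, the inclusion `S ⊆ E ∆ f(E)` says that `E` contains exactly one element of
`{i} ∪ f⁻¹{i}` for each `i ∈ S`. Two cyclically adjacent positions are never both peaks, so for
`f = (· + 1)` and a cyclic peak set `S` these blocks are pairwise disjoint. If `S ⊆ F ∪ f(F)`, each
block has an element `x ∈ F`; adding `x` to `E` flips the condition at its own block and at no
other, so whether `x ∈ E` is forced by the rest of `E`. Removing one such `x` per element of `S`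
leaves `|F| - |S|` free choices.
-/

open Finset
open scoped symmDiff

section SymmDiffImage

variable {α : Type*} [DecidableEq α]

theorem card_filter_powerset_insert_of_iff_not {F : Finset α} {x : α} (hx : x ∉ F)
    {P Q : Finset α → Prop} [DecidablePred P] [DecidablePred Q]
    (hP : ∀ E ⊆ F, P (insert x E) ↔ P E) (hQ : ∀ E ⊆ F, Q (insert x E) ↔ ¬Q E) :
    #{E ∈ (insert x F).powerset | Q E ∧ P E} = #{E ∈ F.powerset | P E} := by
  simp only [card_filter]
  rw [sum_powerset_insert hx, ← sum_add_distrib]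
  refine sum_congr rfl fun E hE => ?_
  rw [mem_powerset] at hE
  by_cases hQE : Q E <;> simp [hP E hE, hQ E hE, hQE]

variable {f : α → α}

theorem insert_symmDiff_image_insert (hf : f.Injective) {E : Finset α} {x : α} (hx : x ∉ E) :
    insert x E ∆ (insert x E).image f = (E ∆ E.image f) ∆ ({x} ∆ {f x}) := by
  have h : insert x E = E ∆ {x} := by
    rw [(disjoint_singleton_right.2 hx).symmDiff_eq_sup, sup_eq_union, union_comm, insert_eq]
  rw [h, image_symmDiff _ _ hf, image_singleton, symmDiff_symmDiff_symmDiff_comm]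

theorem card_filter_insert_subset_symmDiff_image (hf : f.Injective) {S F : Finset α} {a x : α}
    (hx : x ∉ F) (ha : a ∈ ({x} ∆ {f x} : Finset α)) (hS : Disjoint S ({x} ∆ {f x})) :
    #{E ∈ (insert x F).powerset | insert a S ⊆ E ∆ E.image f} =
      #{E ∈ F.powerset | S ⊆ E ∆ E.image f} := by
  simp only [insert_subset_iff]
  refine card_filter_powerset_insert_of_iff_not hx (fun E hE => ?_) fun E hE => ?_ <;>
    rw [insert_symmDiff_image_insert hf fun h => hx (hE h)]
  · refine forall₂_congr fun i hi => ?_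
    simp only [mem_symmDiff (s := E ∆ _), disjoint_left.1 hS hi, not_false_eq_true, and_true,
      false_and, or_false]
  · simp only [mem_symmDiff (s := E ∆ _), ha, not_true_eq_false, and_false, true_and, false_or]

theorem card_filter_subset_symmDiff_image (hf : f.Injective) {S F : Finset α}
    (hS : ∀ i ∈ S, f i ∉ S) (hSF : S ⊆ F ∪ F.image f) :
    #{E ∈ F.powerset | S ⊆ E ∆ E.image f} = 2 ^ (#F - #S) := by
  induction S using Finset.induction_on generalizing F with
  | empty => simp
  | insert a S ha ih =>
    obtain ⟨x, hxF, hxa⟩ : ∃ x ∈ F, x = a ∨ f x = a := by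
      simpa [or_and_right, and_or_left, exists_or] using hSF (mem_insert_self a S)
    obtain ⟨F, hx, rfl⟩ : ∃ F', x ∉ F' ∧ insert x F' = F :=
      ⟨F.erase x, notMem_erase x F, insert_erase hxF⟩
    -- `x` and `f x` are not both in `insert a S` and one of them is `a`, so neither is in `S`.
    have hx_or : x ∉ insert a S ∨ f x ∉ insert a S := not_or_of_imp (hS x)
    have ha_mem : a ∈ ({x} ∆ {f x} : Finset α) := by
      simp only [mem_symmDiff, mem_singleton]
      grind
    have hS_notMem : ∀ i ∈ S, i ≠ x ∧ i ≠ f x := by grind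
    have hS_disj : Disjoint S ({x} ∆ {f x}) :=
      disjoint_left.2 fun i hi => by simp [mem_symmDiff, hS_notMem i hi]
    have hSF' : S ⊆ F ∪ F.image f := by
      intro i hi
      simpa [hS_notMem i hi] using hSF (mem_insert_of_mem hi)
    rw [card_filter_insert_subset_symmDiff_image hf hx ha_mem hS_disj,
      ih (fun i hi h => hS i (mem_insert_of_mem hi) (mem_insert_of_mem h)) hSF',
      card_insert_of_notMem hx, card_insert_of_notMem ha, Nat.add_sub_add_right]

theorem symmDiff_image_subset_union_image {E F : Finset α} (h : E ⊆ F) :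
    E ∆ E.image f ⊆ F ∪ F.image f :=
  symmDiff_subset_union.trans (union_subset_union h (image_subset_image h))

theorem stmt11_general (hf : f.Injective) {S : Finset α} (hS : ∀ i ∈ S, f i ∉ S) (F : Finset α) :
    #{E ∈ F.powerset | S ⊆ E ∆ E.image f} =
      if S ⊆ F ∪ F.image f then 2 ^ (#F - #S) else 0 := by
  split_ifs with hSF
  · exact card_filter_subset_symmDiff_image hf hS hSF
  · rw [card_filter_eq_zero_iff]
    exact fun E hE hSE => hSF (hSE.trans (symmDiff_image_subset_union_image (mem_powerset.1 hE)))

end SymmDiffImage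

theorem add_one_notMem_cPkF {n : ℕ} [NeZero n] {w : Fin n → Fin n} {i : Fin n}
    (hi : i ∈ cPkF n w) : i + 1 ∉ cPkF n w := by
  simp only [cPkF, mem_filter_univ, add_sub_cancel_right] at hi ⊢
  exact fun h => lt_asymm hi.2 h.1

/-- if `S` is a cyclic peak set in `[n]`, then for every `F ⊆ [n]` the
number of subsets `E ⊆ F` with `S ⊆ E △ (E+1)` equals `2^{|F|−|S|}` when
`S ⊆ F ∪ (F+1)`, and `0` otherwise. -/
theorem stmt11 (n : ℕ) [NeZero n] (S : Finset (Fin n))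
    (hS : ∃ w : Equiv.Perm (Fin n), cPkF n ⇑w = S) (F : Finset (Fin n)) :
    (F.powerset.filter (fun E => S ⊆ symmDiff E (shiftF n E 1))).card =
      if S ⊆ F ∪ shiftF n F 1 then 2 ^ (F.card - S.card) else 0 := by
  obtain ⟨w, rfl⟩ := hS
  exact stmt11_general (add_left_injective 1) (fun _ => add_one_notMem_cPkF) F
end

section
/- Order polynomial of enriched w-partitions: let w ∈ S_n with n ≥ 1 and let m ≥ 0 be an integer. Then the number of enriched w-partitions f with |f(i)| ≤ m for all i ∈ [n] equals 2^{2·pk(w)+1} · Σ_{k=0}^{m−1−pk(w)} C(n+k, k) · C(n − 2·pk(w) − 1, m − 1 − pk(w) − k), where C(a,b) denotes the binomial coefficient, C(n+k,k) = ((n+1 multichoose k)) counts multisets of size k on an (n+1)-element set, and the sum is empty (so the count is 0) when m − 1 − pk(w) < 0. -/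
/-!
List `ℙ′` increasingly as `-1 ≺ 1 ≺ -2 ≺ 2 ≺ ⋯` and number its elements `0, 1, 2, 3, …`. Read along
`w`, an enriched `w`-partition is a weakly increasing word of natural numbers in which two
neighbours may be equal only to an even number at a descent of `w` and only to an odd number at an
ascent. Let `F_n` and `G_n` be the generating functions in `m` of the numbers of such words of
length `n + 1` with letters below `2 m` and below `2 m + 1`. Sorting the words by their last letter
gives

* at a descent, `G_{n+1} = F_{n+1} + G_n` and `F_{n+1} = X (G_{n+1} + G_n)`;
* at an ascent, `G_{n+1} = F_{n+1} + F_n` and `F_{n+1} = X G_{n+1} + F_n`.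

Eliminating `G`, one more letter multiplies `F` by `(1 + X) / (1 - X)`, except that a descent right
after an ascent, which completes a peak, multiplies it by `4 X / ((1 - X) (1 + X))`. Starting from
`F_0 = 2 X / (1 - X) ^ 2`, this determines `F_n` from the number of peaks, and the theorem compares
the coefficients of `X ^ m`.
-/

section

open Finset PowerSeries

/-! ### Peaks of a descent set -/

/-- `k` is a peak position of a word with descent set `D`, where `k ∈ D` means that the letter at
position `k` exceeds the one at position `k + 1`. -/
def IsPeak (D : Finset ℕ) (k : ℕ) : Prop :=
  0 < k ∧ k - 1 ∉ D ∧ k ∈ D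

instance (D : Finset ℕ) : DecidablePred (IsPeak D) :=
  fun _ => inferInstanceAs (Decidable (_ ∧ _ ∧ _))

theorem not_isPeak_zero (D : Finset ℕ) : ¬ IsPeak D 0 :=
  fun h => h.1.false

theorem IsPeak.not_succ {D : Finset ℕ} {k : ℕ} (h : IsPeak D k) : ¬ IsPeak D (k + 1) :=
  fun h' => h'.2.1 h.2.2

theorem two_mul_count_isPeak_le (D : Finset ℕ) : ∀ n, 2 * Nat.count (IsPeak D) n ≤ n
  | 0 => by simp
  | 1 => by simp [Nat.count_succ, not_isPeak_zero]
  | n + 2 => by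
    have ih := two_mul_count_isPeak_le D n
    rw [Nat.count_succ, Nat.count_succ]
    grind [IsPeak.not_succ]

/-! ### Enriched words -/

/-- The bound on a letter at position `k` that is followed by the letter `b` in an enriched word:
the letter is below `enrichedBound D k b`, which is `b + 1` or `b` according to whether the letter
may equal `b`. -/
def enrichedBound (D : Finset ℕ) (k b : ℕ) : ℕ :=
  if Even b ↔ k ∈ D then b + 1 else b

/-- Words of length `n + 1` with letters below `b` that are the enriched partitions for the descent
set `D`, when the `x`-th element of `-1 ≺ 1 ≺ -2 ≺ 2 ≺ ⋯` is encoded by `x`. -/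
def enrichedWords (D : Finset ℕ) (n b : ℕ) : Set (Fin (n + 1) → ℕ) :=
  {g | (∀ i, g i < b) ∧ ∀ i : Fin n, g i.castSucc < enrichedBound D i (g i.succ)}

theorem enrichedBound_le (D : Finset ℕ) (k b : ℕ) : enrichedBound D k b ≤ b + 1 := by
  unfold enrichedBound
  split_ifs <;> omega

theorem monotone_of_mem_enrichedWords {D : Finset ℕ} {n b : ℕ} {g : Fin (n + 1) → ℕ}
    (hg : g ∈ enrichedWords D n b) : Monotone g :=
  Fin.monotone_iff_le_succ.2 fun i =>
    Nat.lt_succ_iff.1 ((hg.2 i).trans_le (enrichedBound_le ..))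

theorem finite_enrichedWords (D : Finset ℕ) (n b : ℕ) : (enrichedWords D n b).Finite :=
  (Set.Finite.pi' fun _ => Set.finite_Iio b).subset fun _ hg => hg.1

theorem mem_enrichedWords_succ_iff {D : Finset ℕ} {n b : ℕ} {g : Fin (n + 2) → ℕ} :
    g ∈ enrichedWords D (n + 1) b ↔ g (Fin.last _) < b ∧
      Fin.init g ∈ enrichedWords D n (enrichedBound D n (g (Fin.last _))) := by
  constructor
  · intro hg
    have hlast : g (Fin.last n).castSucc < enrichedBound D n (g (Fin.last _)) := by
      simpa using hg.2 (Fin.last n)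
    refine ⟨hg.1 _, fun i => ?_, fun i => hg.2 i.castSucc⟩
    exact (monotone_of_mem_enrichedWords hg
      (Fin.castSucc_le_castSucc_iff.2 (Fin.le_last i))).trans_lt hlast
  · rintro ⟨hb, hinit, hlink⟩
    refine ⟨Fin.forall_fin_succ'.2 ⟨fun i => ?_, hb⟩, Fin.forall_fin_succ'.2 ⟨hlink, ?_⟩⟩
    · exact (Nat.lt_succ_iff.1 ((hinit i).trans_le (enrichedBound_le ..))).trans_lt hb
    · rw [Fin.succ_last]
      exact hinit (Fin.last n)

theorem enrichedWords_succ_succ (D : Finset ℕ) (n b : ℕ) :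
    enrichedWords D (n + 1) (b + 1) = enrichedWords D (n + 1) b ∪
      (fun g => (Fin.snoc g b : Fin (n + 2) → ℕ)) '' enrichedWords D n (enrichedBound D n b) := by
  ext g
  simp only [Set.mem_union, Set.mem_image]
  constructor
  · intro hg
    obtain ⟨hb, hinit⟩ := mem_enrichedWords_succ_iff.1 hg
    obtain hlt | rfl := Nat.lt_succ_iff_lt_or_eq.1 hb
    · exact Or.inl (mem_enrichedWords_succ_iff.2 ⟨hlt, hinit⟩)
    · exact Or.inr ⟨_, hinit, Fin.snoc_init_self g⟩
  · rintro (hg | ⟨g, hg, rfl⟩)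
    · exact ⟨fun i => (hg.1 i).trans b.lt_succ_self, hg.2⟩
    · exact mem_enrichedWords_succ_iff.2 (by simpa using hg)

theorem ncard_enrichedWords_succ_succ (D : Finset ℕ) (n b : ℕ) :
    (enrichedWords D (n + 1) (b + 1)).ncard =
      (enrichedWords D (n + 1) b).ncard + (enrichedWords D n (enrichedBound D n b)).ncard := by
  have hinj : Function.Injective fun g : Fin (n + 1) → ℕ => (Fin.snoc g b : Fin (n + 2) → ℕ) :=
    fun _ _ h => (Fin.snoc_injective2 h).1
  rw [enrichedWords_succ_succ, Set.ncard_union_eq _ (finite_enrichedWords ..)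
    ((finite_enrichedWords ..).image _), Set.ncard_image_of_injective _ hinj]
  rw [Set.disjoint_left]
  rintro _ hg ⟨g, -, rfl⟩
  simpa using hg.1 (Fin.last _)

theorem ncard_enrichedWords_zero_left (D : Finset ℕ) (b : ℕ) :
    (enrichedWords D 0 b).ncard = b := by
  have hconst : enrichedWords D 0 b = Function.const (Fin 1) '' Set.Iio b := by
    ext g
    constructor
    · exact fun hg => ⟨g 0, hg.1 0, funext fun i => congrArg g (Subsingleton.elim 0 i)⟩
    · rintro ⟨x, hx, rfl⟩
      exact ⟨fun _ => hx, fun i => i.elim0⟩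
  rw [hconst, Set.ncard_image_of_injective _ Function.const_injective, Set.ncard_Iio_nat]

theorem ncard_enrichedWords_zero_right (D : Finset ℕ) (n : ℕ) :
    (enrichedWords D n 0).ncard = 0 := by
  have hempty : enrichedWords D n 0 = ∅ :=
    Set.eq_empty_of_forall_notMem fun g hg => (hg.1 0).not_ge (Nat.zero_le _)
  rw [hempty, Set.ncard_empty]

/-! ### Generating functions -/

/-- The generating function in `m` of the number of enriched words of length `n + 1` with letters
below `2 * m + r`. For `r = 0` these letters encode `|a| ≤ m`, and `r = 1` adds `-(m + 1)`. -/
noncomputable def enrichedSeries (D : Finset ℕ) (r n : ℕ) : ℤ⟦X⟧ :=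
  PowerSeries.mk fun m => ((enrichedWords D n (2 * m + r)).ncard : ℤ)

variable {D : Finset ℕ} {n : ℕ}

theorem enrichedSeries_one_zero (D : Finset ℕ) :
    enrichedSeries D 1 0 = enrichedSeries D 0 0 + PowerSeries.mk 1 := by
  ext m
  simp [enrichedSeries, ncard_enrichedWords_zero_left]

theorem enrichedSeries_zero_zero (D : Finset ℕ) :
    enrichedSeries D 0 0 = X * (enrichedSeries D 1 0 + PowerSeries.mk 1) := by
  ext (_ | m)
  · simp [enrichedSeries, ncard_enrichedWords_zero_left]
  · simp [enrichedSeries, coeff_succ_X_mul, ncard_enrichedWords_zero_left, mul_add_one, add_assoc]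

theorem enrichedSeries_one_succ_of_mem (h : n ∈ D) :
    enrichedSeries D 1 (n + 1) = enrichedSeries D 0 (n + 1) + enrichedSeries D 1 n := by
  ext m
  simp [enrichedSeries, ncard_enrichedWords_succ_succ, enrichedBound, h]

theorem enrichedSeries_one_succ_of_notMem (h : n ∉ D) :
    enrichedSeries D 1 (n + 1) = enrichedSeries D 0 (n + 1) + enrichedSeries D 0 n := by
  ext m
  simp [enrichedSeries, ncard_enrichedWords_succ_succ, enrichedBound, h]

theorem enrichedSeries_zero_succ_of_mem (h : n ∈ D) :
    enrichedSeries D 0 (n + 1) = X * (enrichedSeries D 1 (n + 1) + enrichedSeries D 1 n) := by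
  ext (_ | m)
  · simp [enrichedSeries, ncard_enrichedWords_zero_right]
  · have hbound : enrichedBound D n (2 * m + 1) = 2 * m + 1 := by simp [enrichedBound, h]
    have hcount := ncard_enrichedWords_succ_succ D n (2 * m + 1)
    rw [hbound] at hcount
    simp [enrichedSeries, coeff_succ_X_mul, mul_add_one, hcount]

theorem enrichedSeries_zero_succ_of_notMem (h : n ∉ D) :
    enrichedSeries D 0 (n + 1) = X * enrichedSeries D 1 (n + 1) + enrichedSeries D 0 n := by
  ext (_ | m)
  · simp [enrichedSeries, ncard_enrichedWords_zero_right]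
  · have hbound : enrichedBound D n (2 * m + 1) = 2 * m + 1 + 1 := by simp [enrichedBound, h]
    have hcount := ncard_enrichedWords_succ_succ D n (2 * m + 1)
    rw [hbound] at hcount
    simp [enrichedSeries, coeff_succ_X_mul, mul_add_one, hcount]

theorem one_sub_X_sq_mul_enrichedSeries_zero_zero (D : Finset ℕ) :
    (1 - X) ^ 2 * enrichedSeries D 0 0 = 2 * X := by
  linear_combination (1 - X) * enrichedSeries_zero_zero D +
    (1 - X) * X * enrichedSeries_one_zero D + 2 * X * mk_one_mul_one_sub_eq_one ℤ

theorem one_add_X_mul_enrichedSeries_zero_zero (D : Finset ℕ) :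
    (1 + X) * enrichedSeries D 0 0 = 2 * X * enrichedSeries D 1 0 := by
  linear_combination enrichedSeries_zero_zero D - X * enrichedSeries_one_zero D

theorem one_add_X_mul_enrichedSeries_zero_succ_of_mem (h : n ∈ D) :
    (1 + X) * enrichedSeries D 0 (n + 1) = 2 * X * enrichedSeries D 1 (n + 1) := by
  linear_combination enrichedSeries_zero_succ_of_mem h - X * enrichedSeries_one_succ_of_mem h

theorem one_add_X_mul_enrichedSeries_one_succ_of_notMem (h : n ∉ D) :
    (1 + X) * enrichedSeries D 1 (n + 1) = 2 * enrichedSeries D 0 (n + 1) := by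
  linear_combination enrichedSeries_one_succ_of_notMem h - enrichedSeries_zero_succ_of_notMem h

theorem one_sub_X_mul_enrichedSeries_zero_succ_of_mem (h : n ∈ D) :
    (1 - X) * enrichedSeries D 0 (n + 1) = 2 * X * enrichedSeries D 1 n := by
  linear_combination enrichedSeries_zero_succ_of_mem h + X * enrichedSeries_one_succ_of_mem h

theorem one_sub_X_mul_enrichedSeries_zero_succ_of_notMem (h : n ∉ D) :
    (1 - X) * enrichedSeries D 0 (n + 1) = (1 + X) * enrichedSeries D 0 n := by
  linear_combination enrichedSeries_zero_succ_of_notMem h +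
    X * enrichedSeries_one_succ_of_notMem h

theorem one_sub_X_mul_enrichedSeries_zero_succ_of_not_isPeak (h : ¬ IsPeak D n) :
    (1 - X) * enrichedSeries D 0 (n + 1) = (1 + X) * enrichedSeries D 0 n := by
  by_cases hn : n ∈ D
  · rw [one_sub_X_mul_enrichedSeries_zero_succ_of_mem hn]
    obtain _ | n := n
    · exact (one_add_X_mul_enrichedSeries_zero_zero D).symm
    · have hprev : n ∈ D := by_contra fun hprev => h ⟨n.succ_pos, hprev, hn⟩
      exact (one_add_X_mul_enrichedSeries_zero_succ_of_mem hprev).symm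
  · exact one_sub_X_mul_enrichedSeries_zero_succ_of_notMem hn

theorem one_sub_X_mul_enrichedSeries_zero_succ_of_isPeak (h : IsPeak D n) :
    (1 + X) * ((1 - X) * enrichedSeries D 0 (n + 1)) = 4 * X * enrichedSeries D 0 n := by
  obtain ⟨hpos, hprev, hn⟩ := h
  obtain ⟨n, rfl⟩ := Nat.exists_eq_add_one_of_ne_zero hpos.ne'
  rw [Nat.add_sub_cancel] at hprev
  linear_combination (1 + X) * one_sub_X_mul_enrichedSeries_zero_succ_of_mem hn +
    2 * X * one_add_X_mul_enrichedSeries_one_succ_of_notMem hprev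

theorem one_add_X_ne_zero {R : Type*} [Semiring R] [Nontrivial R] :
    (1 + X : R⟦X⟧) ≠ 0 := fun h => by
  simpa using congrArg (coeff 0) h

theorem enrichedSeries_zero_mul_pow_mul_pow (D : Finset ℕ) (n : ℕ) :
    enrichedSeries D 0 n * (1 - X) ^ (n + 2) * (1 + X) ^ (2 * Nat.count (IsPeak D) n) =
      2 ^ (2 * Nat.count (IsPeak D) n + 1) * X ^ (Nat.count (IsPeak D) n + 1) * (1 + X) ^ n := by
  induction n with
  | zero =>
    rw [Nat.count_zero]
    linear_combination one_sub_X_sq_mul_enrichedSeries_zero_zero D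
  | succ n ih =>
    rw [Nat.count_succ]
    generalize Nat.count (IsPeak D) n = p at ih ⊢
    split_ifs with h
    · linear_combination (1 - X) ^ (n + 2) * (1 + X) ^ (2 * p + 1) *
        one_sub_X_mul_enrichedSeries_zero_succ_of_isPeak h + 4 * X * (1 + X) * ih
    · linear_combination (1 - X) ^ (n + 2) * (1 + X) ^ (2 * p) *
        one_sub_X_mul_enrichedSeries_zero_succ_of_not_isPeak h + (1 + X) * ih

theorem enrichedSeries_zero_mul_pow (D : Finset ℕ) (n : ℕ) :
    enrichedSeries D 0 n * (1 - X) ^ (n + 2) =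
      2 ^ (2 * Nat.count (IsPeak D) n + 1) * X ^ (Nat.count (IsPeak D) n + 1) *
        (1 + X) ^ (n - 2 * Nat.count (IsPeak D) n) := by
  refine mul_right_cancel₀ (pow_ne_zero (2 * Nat.count (IsPeak D) n) one_add_X_ne_zero) ?_
  rw [enrichedSeries_zero_mul_pow_mul_pow, mul_assoc _ ((1 + X) ^ _), ← pow_add,
    Nat.sub_add_cancel (two_mul_count_isPeak_le D n)]

theorem coeff_mk_choose_mul_one_add_X_pow {R : Type*} [CommSemiring R] (d q N : ℕ) :
    coeff N (PowerSeries.mk (fun k => ((d + k).choose d : R)) * (1 + X) ^ q) =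
      ∑ k ∈ range (N + 1), ((d + k).choose d * q.choose (N - k) : R) := by
  have hpoly : (1 + X : R⟦X⟧) ^ q = ((1 + Polynomial.X) ^ q : Polynomial R) := by simp
  simp only [coeff_mul, Finset.Nat.sum_antidiagonal_eq_sum_range_succ_mk, coeff_mk, hpoly,
    Polynomial.coeff_coe, Polynomial.coeff_one_add_X_pow, Nat.succ_eq_add_one]

theorem ncard_enrichedWords_two_mul (D : Finset ℕ) (n m : ℕ) :
    (enrichedWords D n (2 * m)).ncard =
      2 ^ (2 * Nat.count (IsPeak D) n + 1) * ∑ k ∈ range (m - Nat.count (IsPeak D) n),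
        (n + 1 + k).choose k *
          (n - 2 * Nat.count (IsPeak D) n).choose (m - 1 - Nat.count (IsPeak D) n - k) := by
  have hclosed := enrichedSeries_zero_mul_pow D n
  generalize Nat.count (IsPeak D) n = p at hclosed ⊢
  have hseries : enrichedSeries D 0 n = C (2 ^ (2 * p + 1)) * (X ^ (p + 1) *
      (PowerSeries.mk (fun k => ((n + 1 + k).choose (n + 1) : ℤ)) * (1 + X) ^ (n - 2 * p))) := by
    rw [map_pow, map_ofNat]
    linear_combination PowerSeries.mk (fun k => ((n + 1 + k).choose (n + 1) : ℤ)) * hclosed -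
      enrichedSeries D 0 n * mk_add_choose_mul_one_sub_pow_eq_one ℤ (n + 1)
  have hcoeff := congrArg (coeff m) hseries
  rw [enrichedSeries, coeff_mk, coeff_C_mul, coeff_X_pow_mul', add_zero] at hcoeff
  zify
  rw [hcoeff]
  congr 1
  split_ifs with hpm
  · rw [coeff_mk_choose_mul_one_add_X_pow, show m - (p + 1) + 1 = m - p by omega,
      show m - 1 - p = m - (p + 1) by omega]
    simp only [Nat.choose_symm_add]
  · rw [show m - p = 0 by omega, sum_range_zero]

/-! ### Enriched partitions as enriched words -/

/-- The `x`-th element, counting from `0`, of `-1 ≺ 1 ≺ -2 ≺ 2 ≺ ⋯`. -/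
def nthLetter (x : ℕ) : ℤ :=
  if Odd x then (x / 2 : ℕ) + 1 else -((x / 2 : ℕ) + 1)

theorem nthLetter_ne_zero (x : ℕ) : nthLetter x ≠ 0 := by
  unfold nthLetter
  split_ifs <;> omega

theorem exists_nthLetter_eq {a : ℤ} (ha : a ≠ 0) : ∃ x, nthLetter x = a := by
  obtain hneg | hpos := ha.lt_or_gt
  · refine ⟨2 * (a.natAbs - 1), ?_⟩
    rw [nthLetter, if_neg (by simp)]
    omega
  · refine ⟨2 * (a.natAbs - 1) + 1, ?_⟩
    rw [nthLetter, if_pos (by simp)]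
    omega

theorem nthLetter_injective : Function.Injective nthLetter := by
  intro x y h
  simp only [nthLetter, Nat.odd_iff] at h
  split_ifs at h <;> omega

theorem nthLetter_pos_iff {x : ℕ} : 0 < nthLetter x ↔ Odd x := by
  simp only [nthLetter, Nat.odd_iff]
  split_ifs <;> omega

theorem nthLetter_neg_iff {x : ℕ} : nthLetter x < 0 ↔ ¬ Odd x := by
  simp only [nthLetter, Nat.odd_iff]
  split_ifs <;> omega

theorem natAbs_nthLetter_le_iff {x m : ℕ} : (nthLetter x).natAbs ≤ m ↔ x < 2 * m := by
  simp only [nthLetter, Nat.odd_iff]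
  split_ifs <;> omega

theorem ple_nthLetter_iff {x y : ℕ} : ple (nthLetter x) (nthLetter y) ↔ x ≤ y := by
  simp only [ple, nthLetter, Nat.odd_iff, Int.abs_eq_natAbs]
  split_ifs <;> omega

/-- The set of positions `k` at which the letter of `w` exceeds the next one. -/
def descentSet {α : Type*} [LinearOrder α] (w : Fin (n + 1) → α) : Finset ℕ :=
  ({i | w i.succ < w i.castSucc} : Finset (Fin n)).map Fin.valEmbedding

theorem val_mem_descentSet {α : Type*} [LinearOrder α] {w : Fin (n + 1) → α} {i : Fin n} :
    (i : ℕ) ∈ descentSet w ↔ w i.succ < w i.castSucc := by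
  simp [descentSet, ← Fin.ext_iff]

theorem val_notMem_descentSet {α : Type*} [LinearOrder α] {w : Fin (n + 1) → α}
    (hw : w.Injective) {i : Fin n} :
    (i : ℕ) ∉ descentSet w ↔ w i.castSucc < w i.succ := by
  rw [val_mem_descentSet, not_lt, le_iff_lt_or_eq, or_iff_left (hw.ne i.castSucc_lt_succ.ne)]

theorem ple_and_strict_iff_lt_enrichedBound {α : Type*} [LinearOrder α] {w : Fin (n + 1) → α}
    (hw : w.Injective) (i : Fin n) (x y : ℕ) :
    (ple (nthLetter x) (nthLetter y) ∧ (nthLetter x = nthLetter y →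
      (0 < nthLetter x → w i.castSucc < w i.succ) ∧
        (nthLetter x < 0 → w i.succ < w i.castSucc))) ↔
      x < enrichedBound (descentSet w) i y := by
  rw [ple_nthLetter_iff, nthLetter_injective.eq_iff, nthLetter_pos_iff, nthLetter_neg_iff,
    ← val_mem_descentSet, ← val_notMem_descentSet hw]
  unfold enrichedBound
  obtain hlt | rfl | hgt := lt_trichotomy x y
  · have : x < y + 1 := by omega
    simp [hlt.le, hlt.ne, apply_ite (x < ·), *]
  · simp only [le_refl, true_and, true_implies, apply_ite (x < ·),
      Nat.lt_add_one, lt_irrefl, if_true_left, ← Nat.not_even_iff_odd]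
    tauto
  · have : ¬ x < y + 1 := by omega
    simp [hgt.not_ge, hgt.not_gt, apply_ite (x < ·), *]

theorem forall_val_add_one_eq_iff {P : Fin (n + 1) → Fin (n + 1) → Prop} :
    (∀ j k : Fin (n + 1), (j : ℕ) + 1 = k → P j k) ↔ ∀ i : Fin n, P i.castSucc i.succ := by
  refine ⟨fun h i => h _ _ (by simp), fun h j k hjk => ?_⟩
  have hj : (j : ℕ) < n := by omega
  obtain rfl : k = Fin.succ ⟨j, hj⟩ := Fin.ext hjk.symm
  exact h ⟨j, hj⟩

theorem isEnrichedLin_nthLetter_iff (w : Equiv.Perm (Fin (n + 1))) (m : ℕ)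
    (g : Fin (n + 1) → ℕ) :
    (IsEnrichedLin (n + 1) w (nthLetter ∘ g ∘ w.symm) ∧
      ∀ i, ((nthLetter ∘ g ∘ w.symm) i).natAbs ≤ m) ↔
      g ∈ enrichedWords (descentSet w) n (2 * m) := by
  have hbound : (∀ i, g (w.symm i) < 2 * m) ↔ ∀ i, g i < 2 * m :=
    w.symm.forall_congr_right (q := fun i => g i < 2 * m)
  simp only [IsEnrichedLin, enrichedWords, forall_val_add_one_eq_iff, Function.comp_apply,
    Equiv.symm_apply_apply, ple_and_strict_iff_lt_enrichedBound w.injective, nthLetter_ne_zero,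
    natAbs_nthLetter_le_iff, hbound, Set.mem_ofPred_eq, ne_eq, not_false_eq_true, implies_true,
    true_and]
  exact and_comm

theorem card_isEnrichedLin_eq_ncard_enrichedWords (w : Equiv.Perm (Fin (n + 1))) (m : ℕ) :
    Nat.card {f : Fin (n + 1) → ℤ //
        IsEnrichedLin (n + 1) w f ∧ ∀ i, (f i).natAbs ≤ m} =
      (enrichedWords (descentSet w) n (2 * m)).ncard := by
  have hinj : Function.Injective fun g : Fin (n + 1) → ℕ => nthLetter ∘ g ∘ w.symm :=
    nthLetter_injective.comp_left.comp w.symm.surjective.injective_comp_right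
  rw [← Set.ncard_image_of_injective _ hinj, ← Nat.card_coe_set_eq]
  refine Nat.card_congr (Equiv.subtypeEquivRight fun f => ?_)
  constructor
  · intro hf
    choose x hx using fun i => exists_nthLetter_eq (hf.1.1 i)
    have hfx : nthLetter ∘ (x ∘ w) ∘ w.symm = f := funext fun i => by simp [hx]
    exact ⟨x ∘ w, (isEnrichedLin_nthLetter_iff w m _).1 (by rwa [hfx]), hfx⟩
  · rintro ⟨g, hg, rfl⟩
    exact (isEnrichedLin_nthLetter_iff w m g).2 hg

theorem castSucc_mem_PkF_iff {w : Fin (n + 1) → Fin (n + 1)} (hw : w.Injective) (i : Fin n) :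
    i.castSucc ∈ PkF (n + 1) w ↔ IsPeak (descentSet w) i := by
  obtain _ | n := n
  · exact i.elim0
  induction i using Fin.cases with
  | zero => simp [PkF, IsPeak]
  | succ j =>
    have hpred : j.castSucc.succ - 1 = j.castSucc.castSucc := by
      rw [← Fin.coeSucc_eq_succ, add_sub_cancel_right]
    have hsucc : j.castSucc.succ + 1 = j.succ.succ := by
      rw [← Fin.castSucc_succ, Fin.coeSucc_eq_succ]
    have hprev : (j : ℕ) ∉ descentSet w ↔ w j.castSucc.castSucc < w j.castSucc.succ :=
      val_notMem_descentSet hw (i := j.castSucc)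
    have hnext : (j : ℕ) + 1 ∈ descentSet w ↔ w j.succ.succ < w j.succ.castSucc :=
      val_mem_descentSet (i := j.succ)
    simp [PkF, IsPeak, hpred, hsucc, hprev, hnext]

theorem card_PkF_eq_count_isPeak {w : Fin (n + 1) → Fin (n + 1)} (hw : w.Injective) :
    (PkF (n + 1) w).card = Nat.count (IsPeak (descentSet w)) n := by
  have hlast : Fin.last n ∉ PkF (n + 1) w := by simp [PkF]
  rw [Nat.count_eq_card_filter_range, ← card_map Fin.valEmbedding]
  congr 1
  ext k
  simp only [mem_map, Fin.exists_fin_succ', castSucc_mem_PkF_iff hw, hlast, false_and, or_false,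
    Fin.valEmbedding_apply, Fin.val_castSucc, mem_filter, mem_range]
  exact ⟨fun ⟨i, hi, hik⟩ => hik ▸ ⟨i.isLt, hi⟩, fun ⟨hk, hpeak⟩ => ⟨⟨k, hk⟩, hpeak, rfl⟩⟩

end

/-- order polynomial of enriched `w`-partitions: for `w ∈ S_n`
(`n ≥ 1`) and `m ≥ 0`, the number of enriched `w`-partitions `f` with `|f i| ≤ m`
for all `i` equals
`2^{2·pk w + 1} · Σ_{k=0}^{m−1−pk w} C(n+k,k)·C(n−2·pk w−1, m−1−pk w−k)`
(the sum being empty when `m−1−pk w < 0`). -/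
theorem stmt15 (n : ℕ) [NeZero n] (w : Equiv.Perm (Fin n)) (m : ℕ) :
    Nat.card {f : Fin n → ℤ //
        IsEnrichedLin n ⇑w f ∧ ∀ i, (f i).natAbs ≤ m} =
      2 ^ (2 * (PkF n ⇑w).card + 1) *
        ∑ k ∈ Finset.range (m - (PkF n ⇑w).card),
          Nat.choose (n + k) k *
            Nat.choose (n - 2 * (PkF n ⇑w).card - 1)
              (m - 1 - (PkF n ⇑w).card - k) := by
  obtain ⟨n, rfl⟩ := Nat.exists_eq_succ_of_ne_zero (NeZero.ne n)
  rw [card_isEnrichedLin_eq_ncard_enrichedWords, ncard_enrichedWords_two_mul,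
    card_PkF_eq_count_isPeak w.injective, Nat.sub_right_comm,
    Nat.sub_right_comm n.succ, Nat.succ_sub_one]
end
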